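/- For all real a,b,c,d with 0 < a, 0 < b, 0 < c, 0 < d and a − b − c − d > 0: ∑_{n=0}^∞ (a/2+1)ₙ(a)ₙ(b)ₙ(c)ₙ(d)ₙ/((a/2)ₙ(a−b+1)ₙ(a−c+1)ₙ(a−d+1)ₙ n!) = Γ(a−b+1)Γ(a−c+1)Γ(a−d+1)Γ(a−b−c−d+1)/(Γ(a+1)Γ(a−b−c+1)Γ(a−b−d+1)Γ(a−c−d+1)). -/

import Mathlib

noncomputable def poch (a : ℝ) (n : ℕ) : ℝ := ∏ i ∈ Finset.range n, (a + i)

open Filter Topology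

lemma poch_succ (x : ℝ) (n : ℕ) : poch x (n + 1) = poch x n * (x + n) :=
  Finset.prod_range_succ _ _

lemma poch_pos {x : ℝ} (hx : 0 < x) (n : ℕ) : 0 < poch x n :=
  Finset.prod_pos fun _ _ => by positivity

lemma mul_poch_add_one (x : ℝ) (n : ℕ) : x * poch (x + 1) n = poch x n * (x + n) := by
  induction n with
  | zero => simp [poch]
  | succ n ih =>
    rw [poch_succ, poch_succ, ← mul_assoc, ih]
    push_cast
    ring

lemma poch_add_one {x : ℝ} (hx : 0 < x) (n : ℕ) : poch (x + 1) n = poch x n * (x + n) / x := by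
  rw [eq_div_iff hx.ne', mul_comm, mul_poch_add_one]

lemma Gamma_add_nat_eq_mul_poch {x : ℝ} (hx : 0 < x) (n : ℕ) :
    Real.Gamma (x + n) = Real.Gamma x * poch x n := by
  induction n with
  | zero => simp [poch]
  | succ n ih =>
    have h : x + n ≠ 0 := by positivity
    push_cast
    rw [← add_assoc, Real.Gamma_add_one h, ih, poch_succ]
    ring

lemma tendsto_natCast_add_div (x : ℝ) :
    Tendsto (fun n : ℕ => (x + n) / (n : ℝ)) atTop (𝓝 1) := by
  have h : Tendsto (fun n : ℕ => x / (n : ℝ) + 1) atTop (𝓝 (0 + 1)) :=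
    (tendsto_const_div_atTop_nhds_zero_nat x).add_const 1
  rw [zero_add] at h
  refine h.congr' ?_
  filter_upwards [eventually_gt_atTop 0] with n hn
  have : (n : ℝ) ≠ 0 := by positivity
  field_simp

/-- The Pochhammer symbol divided by its growth rate `n! * n ^ (x - 1)`. -/
noncomputable def normPoch (x : ℝ) (n : ℕ) : ℝ := poch x n / (n.factorial * (n : ℝ) ^ (x - 1))

lemma poch_eq_normPoch_mul (x : ℝ) {n : ℕ} (hn : 0 < n) :
    poch x n = normPoch x n * (n.factorial * (n : ℝ) ^ (x - 1)) := by
  have : (0 : ℝ) < n.factorial * (n : ℝ) ^ (x - 1) := by positivity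
  rw [normPoch, div_mul_cancel₀ _ this.ne']

lemma normPoch_pos {x : ℝ} (hx : 0 < x) {n : ℕ} (hn : 0 < n) : 0 < normPoch x n := by
  have := poch_pos hx n
  unfold normPoch
  positivity

lemma tendsto_normPoch {x : ℝ} (hx : 0 < x) :
    Tendsto (normPoch x) atTop (𝓝 (Real.Gamma x)⁻¹) := by
  have h := ((Real.GammaSeq_tendsto_Gamma x).inv₀ (Real.Gamma_pos_of_pos hx).ne').mul
    ((tendsto_natCast_add_div x).inv₀ one_ne_zero)
  rw [inv_one, mul_one] at h
  refine h.congr' ?_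
  filter_upwards [eventually_gt_atTop 0] with n hn
  have hn' : (0 : ℝ) < n := by positivity
  have hp : Real.GammaSeq x n = (n : ℝ) ^ x * n.factorial / (poch x n * (x + n)) := by
    rw [← poch_succ]; rfl
  have := poch_pos hx n
  rw [hp, normPoch, Real.rpow_sub_one hn'.ne']
  have : (0 : ℝ) < (n : ℝ) ^ x := by positivity
  field_simp

/-- The summand of the very-well-poised `₅F₄(1)` series. -/
noncomputable def dougallTerm (a b c d : ℝ) (n : ℕ) : ℝ :=
  (a + 2 * n) / a * (poch a n * poch b n * poch c n * poch d n)
    / (poch (a - b + 1) n * poch (a - c + 1) n * poch (a - d + 1) n * n.factorial)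

/-- The value of the very-well-poised `₅F₄(1)` series. -/
noncomputable def dougallValue (a b c d : ℝ) : ℝ :=
  Real.Gamma (a - b + 1) * Real.Gamma (a - c + 1) * Real.Gamma (a - d + 1)
      * Real.Gamma (a - b - c - d + 1)
    / (Real.Gamma (a + 1) * Real.Gamma (a - b - c + 1) * Real.Gamma (a - b - d + 1)
        * Real.Gamma (a - c - d + 1))

section

variable {a b c d : ℝ}

lemma dougallTerm_eq (ha : 0 < a) (n : ℕ) :
    poch (a/2 + 1) n * poch a n * poch b n * poch c n * poch d n
      / (poch (a/2) n * poch (a - b + 1) n * poch (a - c + 1) n * poch (a - d + 1) n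
          * (Nat.factorial n)) = dougallTerm a b c d n := by
  have h2 : 0 < a / 2 := by positivity
  have := poch_pos h2 n
  rw [poch_add_one h2, dougallTerm]
  field_simp

lemma dougallTerm_pos (ha : 0 < a) (hb : 0 < b) (hc : 0 < c) (hd : 0 < d)
    (h : 0 < a - b - c - d) (n : ℕ) : 0 < dougallTerm a b c d n := by
  have := poch_pos ha n
  have := poch_pos hb n
  have := poch_pos hc n
  have := poch_pos hd n
  have := poch_pos (show 0 < a - b + 1 by linarith) n
  have := poch_pos (show 0 < a - c + 1 by linarith) n
  have := poch_pos (show 0 < a - d + 1 by linarith) n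
  unfold dougallTerm
  positivity

lemma exists_tendsto_rpow_mul_dougallTerm (ha : 0 < a) (hb : 0 < b) (hc : 0 < c) (hd : 0 < d)
    (h : 0 < a - b - c - d) :
    ∃ L, Tendsto (fun n : ℕ => (n : ℝ) ^ (3 + 2 * (a - b - c - d)) * dougallTerm a b c d n)
      atTop (𝓝 L) := by
  have hA : 0 < a - b + 1 := by linarith
  have hB : 0 < a - c + 1 := by linarith
  have hC : 0 < a - d + 1 := by linarith
  have hden := ((tendsto_normPoch hA).mul (tendsto_normPoch hB)).mul (tendsto_normPoch hC)
  have hnum := (((tendsto_normPoch ha).mul (tendsto_normPoch hb)).mul (tendsto_normPoch hc)).mul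
    (tendsto_normPoch hd)
  have hlin := (tendsto_natCast_add_div (a / 2)).const_mul (2 / a)
  have hne : (Real.Gamma (a - b + 1))⁻¹ * (Real.Gamma (a - c + 1))⁻¹
      * (Real.Gamma (a - d + 1))⁻¹ ≠ 0 := by
    have := Real.Gamma_pos_of_pos hA
    have := Real.Gamma_pos_of_pos hB
    have := Real.Gamma_pos_of_pos hC
    positivity
  refine ⟨_, (hlin.mul (hnum.div hden hne)).congr' ?_⟩
  filter_upwards [eventually_gt_atTop 0] with n hn
  have hn' : (0 : ℝ) < n := by positivity
  have := normPoch_pos hA hn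
  have := normPoch_pos hB hn
  have := normPoch_pos hC hn
  have hpow : (n : ℝ) ^ (3 + 2 * (a - b - c - d)) * n *
      ((n : ℝ) ^ (a - 1) * (n : ℝ) ^ (b - 1) * (n : ℝ) ^ (c - 1) * (n : ℝ) ^ (d - 1)) =
      (n : ℝ) ^ (a - b + 1 - 1) * (n : ℝ) ^ (a - c + 1 - 1) * (n : ℝ) ^ (a - d + 1 - 1) := by
    nth_rewrite 2 [← Real.rpow_one (n : ℝ)]
    simp only [← Real.rpow_add hn']
    congr 1
    ring
  have hpos : 0 < (n : ℝ) ^ (a - b + 1 - 1) * (n : ℝ) ^ (a - c + 1 - 1)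
    * (n : ℝ) ^ (a - d + 1 - 1) := by positivity
  rw [dougallTerm, Pi.div_apply]
  simp only [poch_eq_normPoch_mul _ hn]
  generalize (n : ℝ) ^ (a - b + 1 - 1) = u₁ at *
  generalize (n : ℝ) ^ (a - c + 1 - 1) = u₂ at *
  generalize (n : ℝ) ^ (a - d + 1 - 1) = u₃ at *
  generalize normPoch (a - b + 1) n = v₁ at *
  generalize normPoch (a - c + 1) n = v₂ at *
  generalize normPoch (a - d + 1) n = v₃ at *
  have hf : (0 : ℝ) < n.factorial := by positivity
  generalize (n.factorial : ℝ) = f at *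
  trans (a / 2 + n) * (2 / a) / n * (normPoch a n * normPoch b n * normPoch c n * normPoch d n)
    / (v₁ * v₂ * v₃) * ((u₁ * u₂ * u₃) / (u₁ * u₂ * u₃))
  · rw [div_self hpos.ne']
    field_simp
  · nth_rewrite 1 [← hpow]
    field_simp

lemma summable_dougallTerm (ha : 0 < a) (hb : 0 < b) (hc : 0 < c) (hd : 0 < d)
    (h : 0 < a - b - c - d) : Summable (dougallTerm a b c d) := by
  obtain ⟨L, hL⟩ := exists_tendsto_rpow_mul_dougallTerm ha hb hc hd h
  have hs : Summable fun n : ℕ => (n : ℝ) ^ (-(3 + 2 * (a - b - c - d))) :=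
    Real.summable_nat_rpow.2 (by linarith)
  refine summable_of_isBigO_nat hs ?_
  have hO := (Asymptotics.isBigO_refl
    (fun n : ℕ => (n : ℝ) ^ (-(3 + 2 * (a - b - c - d)))) atTop).mul (hL.isBigO_one ℝ)
  refine (hO.congr' ?_ (by simp))
  filter_upwards [eventually_gt_atTop 0] with n hn
  have hn' : (0 : ℝ) < n := by positivity
  rw [← mul_assoc, ← Real.rpow_add hn']
  simp

lemma tendsto_mul_dougallTerm (ha : 0 < a) (hb : 0 < b) (hc : 0 < c) (hd : 0 < d)
    (h : 0 < a - b - c - d) :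
    Tendsto (fun n : ℕ => n * dougallTerm a b c d n) atTop (𝓝 0) := by
  obtain ⟨L, hL⟩ := exists_tendsto_rpow_mul_dougallTerm ha hb hc hd h
  have hp : Tendsto (fun n : ℕ => (n : ℝ) ^ (-(2 + 2 * (a - b - c - d)))) atTop (𝓝 0) :=
    (tendsto_rpow_neg_atTop (by linarith)).comp tendsto_natCast_atTop_atTop
  have := hp.mul hL
  rw [zero_mul] at this
  refine this.congr' ?_
  filter_upwards [eventually_gt_atTop 0] with n hn
  have hn' : (0 : ℝ) < n := by positivity
  rw [← mul_assoc, ← Real.rpow_add hn', show -(2 + 2 * (a - b - c - d))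
    + (3 + 2 * (a - b - c - d)) = 1 by ring, Real.rpow_one]

/-- The telescoping antidifference of `T(a) - (R(a) / R(a + 1)) T(a + 1)`, where `T` is the
summand and `R` the value of the series. -/
noncomputable def dougallCert (a b c d : ℝ) (n : ℕ) : ℝ :=
  -(n * dougallTerm a b c d n
    * ((a - b - c - d + 1 + a + n) / ((a + 2 * n) * (a - b - c - d + 1))))

lemma tendsto_dougallCert (ha : 0 < a) (hb : 0 < b) (hc : 0 < c) (hd : 0 < d)
    (h : 0 < a - b - c - d) : Tendsto (dougallCert a b c d) atTop (𝓝 0) := by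
  set s := a - b - c - d with hs
  have h0 : Tendsto (fun n : ℕ => n * dougallTerm a b c d n * ((s + 1 + a) / (a * (s + 1))))
      atTop (𝓝 0) := by
    simpa using (tendsto_mul_dougallTerm ha hb hc hd h).mul_const ((s + 1 + a) / (a * (s + 1)))
  have h1 : Tendsto (fun n => -dougallCert a b c d n) atTop (𝓝 0) := by
    refine squeeze_zero (fun n => ?_) (fun n => ?_) h0
    · have := dougallTerm_pos ha hb hc hd h n
      rw [dougallCert, neg_neg, ← hs]
      positivity
    · have := dougallTerm_pos ha hb hc hd h n
      rw [dougallCert, neg_neg, ← hs]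
      gcongr ?_ * ?_
      rw [div_le_div_iff₀ (by positivity) (by positivity), ← sub_nonneg]
      have : (s + 1 + a) * ((a + 2 * n) * (s + 1)) - (s + 1 + a + n) * (a * (s + 1)) =
        (s + 1) * n * (2 * (s + 1) + a) := by ring
      rw [this]
      positivity
  simpa using h1.neg

lemma dougallTerm_succ (ha : 0 < a) (hb : 0 < b) (hc : 0 < c) (hd : 0 < d)
    (h : 0 < a - b - c - d) (n : ℕ) :
    dougallTerm a b c d (n + 1) = dougallTerm a b c d n *
      ((a + 2 * (n + 1)) * (a + n) * (b + n) * (c + n) * (d + n)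
        / ((a + 2 * n) * (a - b + 1 + n) * (a - c + 1 + n) * (a - d + 1 + n) * (n + 1))) := by
  have hA : 0 < a - b + 1 := by linarith
  have hB : 0 < a - c + 1 := by linarith
  have hC : 0 < a - d + 1 := by linarith
  have := poch_pos hA n
  have := poch_pos hB n
  have := poch_pos hC n
  simp only [dougallTerm, poch_succ, Nat.factorial_succ, Nat.cast_mul, Nat.cast_add, Nat.cast_one]
  generalize a - b + 1 = A at *
  generalize a - c + 1 = B at *
  generalize a - d + 1 = C at *
  field_simp

lemma dougallTerm_add_one (ha : 0 < a) (hb : 0 < b) (hc : 0 < c) (hd : 0 < d)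
    (h : 0 < a - b - c - d) (n : ℕ) :
    dougallTerm (a + 1) b c d n = dougallTerm a b c d n *
      ((a + 1 + 2 * n) * (a + n) * (a - b + 1) * (a - c + 1) * (a - d + 1)
        / ((a + 1) * (a + 2 * n) * (a - b + 1 + n) * (a - c + 1 + n) * (a - d + 1 + n))) := by
  have hA : 0 < a - b + 1 := by linarith
  have hB : 0 < a - c + 1 := by linarith
  have hC : 0 < a - d + 1 := by linarith
  have := poch_pos hA n
  have := poch_pos hB n
  have := poch_pos hC n
  rw [dougallTerm, show a + 1 - b = a - b + 1 by ring, show a + 1 - c = a - c + 1 by ring,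
    show a + 1 - d = a - d + 1 by ring, poch_add_one ha, poch_add_one hA, poch_add_one hB,
    poch_add_one hC, dougallTerm]
  generalize a - b + 1 = A at *
  generalize a - c + 1 = B at *
  generalize a - d + 1 = C at *
  field_simp

lemma dougallTerm_add_one_le (ha : 0 < a) (hb : 0 < b) (hc : 0 < c) (hd : 0 < d)
    (h : 0 < a - b - c - d) (n : ℕ) :
    dougallTerm (a + 1) b c d n ≤ dougallTerm a b c d n := by
  rw [dougallTerm_add_one ha hb hc hd h]
  refine mul_le_of_le_one_right (dougallTerm_pos ha hb hc hd h n).le ?_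
  have hn : (0 : ℝ) ≤ n := by positivity
  have key : ∀ x : ℝ, 0 < x → x ≤ a + 1 → x / (x + n) ≤ (a + 1) / (a + 1 + n) := by
    intro x hx hxa
    rw [div_le_div_iff₀ (by positivity) (by positivity)]
    nlinarith
  have hA : 0 < a - b + 1 := by linarith
  have hB : 0 < a - c + 1 := by linarith
  have hC : 0 < a - d + 1 := by linarith
  calc _ = (a + 1 + 2 * n) * (a + n) / ((a + 1) * (a + 2 * n))
        * (((a - b + 1) / (a - b + 1 + n)) * ((a - c + 1) / (a - c + 1 + n))
          * ((a - d + 1) / (a - d + 1 + n))) := by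
        generalize a - b + 1 = A at *
        generalize a - c + 1 = B at *
        generalize a - d + 1 = C at *
        field_simp
    _ ≤ (a + 1 + 2 * n) * (a + n) / ((a + 1) * (a + 2 * n))
        * (((a + 1) / (a + 1 + n)) * ((a + 1) / (a + 1 + n)) * ((a + 1) / (a + 1 + n))) := by
        gcongr _ * (?_ * ?_ * ?_)
        · exact key _ hA (by linarith)
        · exact key _ hB (by linarith)
        · exact key _ hC (by linarith)
    _ ≤ 1 := by
        have : (a + 1 + 2 * n) * (a + n) / ((a + 1) * (a + 2 * n))
          * (((a + 1) / (a + 1 + n)) * ((a + 1) / (a + 1 + n)) * ((a + 1) / (a + 1 + n)))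
          = ((a + 1 + 2 * n) * (a + n) * (a + 1) ^ 2) / ((a + 2 * n) * (a + 1 + n) ^ 3) := by
          field_simp
        rw [this, div_le_one (by positivity)]
        calc (a + 1 + 2 * n) * (a + n) * (a + 1) ^ 2
            ≤ (a + 1 + 3 * n) * (a + 2 * n) * (a + 1) ^ 2 := by
              gcongr <;> linarith
          _ = (a + 2 * n) * ((a + 1 + 3 * n) * (a + 1) ^ 2) := by ring
          _ ≤ (a + 2 * n) * (a + 1 + n) ^ 3 := by
              gcongr
              rw [← sub_nonneg]
              ring_nf
              positivity

lemma dougallTerm_add_nat_le (ha : 0 < a) (hb : 0 < b) (hc : 0 < c) (hd : 0 < d)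
    (h : 0 < a - b - c - d) (N n : ℕ) :
    dougallTerm (a + N) b c d n ≤ dougallTerm a b c d n := by
  induction N with
  | zero => simp
  | succ N ih =>
    have hN : (0 : ℝ) ≤ N := by positivity
    push_cast
    rw [← add_assoc]
    exact (dougallTerm_add_one_le (by positivity) hb hc hd (by linarith) n).trans ih

lemma dougallValue_pos (ha : 0 < a) (hb : 0 < b) (hc : 0 < c) (hd : 0 < d)
    (h : 0 < a - b - c - d) : 0 < dougallValue a b c d := by
  have := Real.Gamma_pos_of_pos (show 0 < a + 1 by linarith)
  have := Real.Gamma_pos_of_pos (show 0 < a - b + 1 by linarith)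
  have := Real.Gamma_pos_of_pos (show 0 < a - c + 1 by linarith)
  have := Real.Gamma_pos_of_pos (show 0 < a - d + 1 by linarith)
  have := Real.Gamma_pos_of_pos (show 0 < a - b - c + 1 by linarith)
  have := Real.Gamma_pos_of_pos (show 0 < a - b - d + 1 by linarith)
  have := Real.Gamma_pos_of_pos (show 0 < a - c - d + 1 by linarith)
  have := Real.Gamma_pos_of_pos (show 0 < a - b - c - d + 1 by linarith)
  unfold dougallValue
  positivity

lemma dougallValue_add_nat (hb : 0 < b) (hc : 0 < c) (hd : 0 < d)
    (h : 0 < a - b - c - d) (N : ℕ) :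
    dougallValue (a + N) b c d = dougallValue a b c d *
      (poch (a - b + 1) N * poch (a - c + 1) N * poch (a - d + 1) N * poch (a - b - c - d + 1) N
        / (poch (a + 1) N * poch (a - b - c + 1) N * poch (a - b - d + 1) N
          * poch (a - c - d + 1) N)) := by
  rw [dougallValue, show a + N - b + 1 = a - b + 1 + N by ring,
    show a + N - c + 1 = a - c + 1 + N by ring, show a + N - d + 1 = a - d + 1 + N by ring,
    show a + N - b - c - d + 1 = a - b - c - d + 1 + N by ring,
    show a + N + 1 = a + 1 + N by ring, show a + N - b - c + 1 = a - b - c + 1 + N by ring,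
    show a + N - b - d + 1 = a - b - d + 1 + N by ring,
    show a + N - c - d + 1 = a - c - d + 1 + N by ring,
    Gamma_add_nat_eq_mul_poch (by linarith), Gamma_add_nat_eq_mul_poch (by linarith),
    Gamma_add_nat_eq_mul_poch (by linarith), Gamma_add_nat_eq_mul_poch (by linarith),
    Gamma_add_nat_eq_mul_poch (by linarith), Gamma_add_nat_eq_mul_poch (by linarith),
    Gamma_add_nat_eq_mul_poch (by linarith), Gamma_add_nat_eq_mul_poch (by linarith),
    dougallValue, div_mul_div_comm]
  congr 1 <;> ring

lemma tendsto_dougallValue_add_nat (ha : 0 < a) (hb : 0 < b) (hc : 0 < c) (hd : 0 < d)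
    (h : 0 < a - b - c - d) :
    Tendsto (fun N : ℕ => dougallValue (a + N) b c d) atTop (𝓝 1) := by
  have h₁ : 0 < a - b + 1 := by linarith
  have h₂ : 0 < a - c + 1 := by linarith
  have h₃ : 0 < a - d + 1 := by linarith
  have h₄ : 0 < a - b - c - d + 1 := by linarith
  have h₅ : 0 < a + 1 := by linarith
  have h₆ : 0 < a - b - c + 1 := by linarith
  have h₇ : 0 < a - b - d + 1 := by linarith
  have h₈ : 0 < a - c - d + 1 := by linarith
  have hnum := (((tendsto_normPoch h₁).mul (tendsto_normPoch h₂)).mul (tendsto_normPoch h₃)).mul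
    (tendsto_normPoch h₄)
  have hden := (((tendsto_normPoch h₅).mul (tendsto_normPoch h₆)).mul (tendsto_normPoch h₇)).mul
    (tendsto_normPoch h₈)
  have g₁ := Real.Gamma_pos_of_pos h₁
  have g₂ := Real.Gamma_pos_of_pos h₂
  have g₃ := Real.Gamma_pos_of_pos h₃
  have g₄ := Real.Gamma_pos_of_pos h₄
  have g₅ := Real.Gamma_pos_of_pos h₅
  have g₆ := Real.Gamma_pos_of_pos h₆
  have g₇ := Real.Gamma_pos_of_pos h₇
  have g₈ := Real.Gamma_pos_of_pos h₈
  have hlim := (hnum.div hden (by positivity)).const_mul (dougallValue a b c d)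
  have hone : dougallValue a b c d * ((Real.Gamma (a - b + 1))⁻¹ * (Real.Gamma (a - c + 1))⁻¹
      * (Real.Gamma (a - d + 1))⁻¹ * (Real.Gamma (a - b - c - d + 1))⁻¹
      / ((Real.Gamma (a + 1))⁻¹ * (Real.Gamma (a - b - c + 1))⁻¹ * (Real.Gamma (a - b - d + 1))⁻¹
        * (Real.Gamma (a - c - d + 1))⁻¹)) = 1 := by
    simp only [← mul_inv]
    rw [inv_div_inv, dougallValue, div_mul_div_cancel₀ (by positivity), div_self (by positivity)]
  rw [hone] at hlim
  refine hlim.congr' ?_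
  filter_upwards [eventually_gt_atTop 0] with N hN
  have hN' : (0 : ℝ) < N := by positivity
  have hpow : (N : ℝ) ^ (a - b + 1 - 1) * (N : ℝ) ^ (a - c + 1 - 1) * (N : ℝ) ^ (a - d + 1 - 1)
      * (N : ℝ) ^ (a - b - c - d + 1 - 1) = (N : ℝ) ^ (a + 1 - 1) * (N : ℝ) ^ (a - b - c + 1 - 1)
      * (N : ℝ) ^ (a - b - d + 1 - 1) * (N : ℝ) ^ (a - c - d + 1 - 1) := by
    simp only [← Real.rpow_add hN']
    congr 1
    ring
  have hpos : 0 < (N.factorial : ℝ) ^ 4 * ((N : ℝ) ^ (a + 1 - 1) * (N : ℝ) ^ (a - b - c + 1 - 1)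
      * (N : ℝ) ^ (a - b - d + 1 - 1) * (N : ℝ) ^ (a - c - d + 1 - 1)) := by positivity
  rw [Pi.div_apply, dougallValue_add_nat hb hc hd h]
  simp only [poch_eq_normPoch_mul _ hN]
  congr 1
  rw [← mul_div_mul_right _ _ hpos.ne']
  congr 1
  · rw [← hpow]
    ring
  · ring

lemma tendsto_dougallTerm_add_nat (ha : 0 < a) (n : ℕ) :
    Tendsto (fun N : ℕ => dougallTerm (a + N) b c d n) atTop (𝓝 (if n = 0 then 1 else 0)) := by
  have hinf : ∀ x : ℝ, Tendsto (fun N : ℕ => x + N) atTop atTop := fun x =>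
    tendsto_atTop_add_const_left _ _ tendsto_natCast_atTop_atTop
  have hratio : ∀ x y : ℝ, Tendsto (fun N : ℕ => (x + N) / (y + N)) atTop (𝓝 1) := fun x y => by
    have := (tendsto_natCast_add_div x).div (tendsto_natCast_add_div y) one_ne_zero
    rw [div_one] at this
    refine this.congr' ?_
    filter_upwards [eventually_gt_atTop 0] with N hN
    have : (N : ℝ) ≠ 0 := by positivity
    simp [div_div_div_cancel_right₀ this]
  rcases Nat.eq_zero_or_pos n with rfl | hn
  · refine tendsto_const_nhds.congr fun N => ?_
    have : a + N ≠ 0 := by positivity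
    simp [dougallTerm, poch, this]
  · have hfac : ∀ i ∈ Finset.range n, Tendsto (fun N : ℕ =>
        (a + i + N) / (a - b + 1 + i + N) * ((b + i) / (a - c + 1 + i + N))
          * ((c + i) / (a - d + 1 + i + N)) * (d + i)) atTop (𝓝 (1 * 0 * 0 * (d + i))) :=
      fun i _ => (((hratio _ _).mul ((hinf _).const_div_atTop _)).mul
        ((hinf _).const_div_atTop _)).mul_const _
    have hlim := (((hratio (a + 2 * n) a).mul (tendsto_finsetProd _ hfac))).div_const
      (n.factorial : ℝ)
    have hz : 1 * ∏ i ∈ Finset.range n, (1 * 0 * 0 * (d + (i : ℝ))) = 0 := by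
      simp [hn.ne']
    rw [hz, zero_div] at hlim
    rw [if_neg hn.ne']
    refine hlim.congr fun N => ?_
    simp only [dougallTerm, poch, Finset.prod_mul_distrib, Finset.prod_div_distrib]
    simp only [show ∀ x : ℝ, a + N - x + 1 = a - x + 1 + N from fun x => by ring,
      add_right_comm _ (N : ℝ)]
    simp only [div_eq_mul_inv, mul_inv]
    ring

lemma tendsto_tsum_dougallTerm_add_nat (ha : 0 < a) (hb : 0 < b) (hc : 0 < c) (hd : 0 < d)
    (h : 0 < a - b - c - d) :
    Tendsto (fun N : ℕ => ∑' n, dougallTerm (a + N) b c d n) atTop (𝓝 1) := by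
  have := tendsto_tsum_of_dominated_convergence (summable_dougallTerm ha hb hc hd h)
    (fun n => tendsto_dougallTerm_add_nat (b := b) (c := c) (d := d) ha n)
    (Eventually.of_forall fun N n => by
      have hN : (0 : ℝ) ≤ N := by positivity
      rw [Real.norm_of_nonneg
        (dougallTerm_pos (by positivity) hb hc hd (by linarith) n).le]
      exact dougallTerm_add_nat_le ha hb hc hd h N n)
  simpa using this

lemma dougallCert_succ_sub (ha : 0 < a) (hb : 0 < b) (hc : 0 < c) (hd : 0 < d)
    (h : 0 < a - b - c - d) (n : ℕ) :
    dougallCert a b c d (n + 1) - dougallCert a b c d n =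
      dougallTerm a b c d n
        - dougallValue a b c d / dougallValue (a + 1) b c d * dougallTerm (a + 1) b c d n := by
  have hR := dougallValue_pos ha hb hc hd h
  have hval := dougallValue_add_nat hb hc hd h 1
  simp only [Nat.cast_one, poch, Finset.prod_range_one, Nat.cast_zero, add_zero] at hval
  have hn : (0 : ℝ) ≤ n := by positivity
  have h₁ : 0 < a - b + 1 := by linarith
  have h₂ : 0 < a - c + 1 := by linarith
  have h₃ : 0 < a - d + 1 := by linarith
  have h₄ : 0 < a - b - c - d + 1 := by linarith
  have h₅ : 0 < a + 1 := by linarith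
  have h₆ : 0 < a - b - c + 1 := by linarith
  have h₇ : 0 < a - b - d + 1 := by linarith
  have h₈ : 0 < a - c - d + 1 := by linarith
  have h₉ : 0 < a - b + 1 + n := by linarith
  have h₁₀ : 0 < a - c + 1 + n := by linarith
  have h₁₁ : 0 < a - d + 1 + n := by linarith
  have hρ : dougallValue a b c d / dougallValue (a + 1) b c d =
      (a + 1) * (a - b - c + 1) * (a - b - d + 1) * (a - c - d + 1)
        / ((a - b + 1) * (a - c + 1) * (a - d + 1) * (a - b - c - d + 1)) := by
    rw [hval, ← div_div, div_self hR.ne', one_div_div]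
  rw [hρ, dougallCert, dougallCert, dougallTerm_succ ha hb hc hd h,
    dougallTerm_add_one ha hb hc hd h]
  push_cast
  generalize dougallTerm a b c d n = t
  generalize (n : ℝ) = x at *
  have : 0 < a + 2 * (x + 1) := by positivity
  have : 0 < a + 2 * x := by positivity
  have : x + 1 ≠ 0 := by positivity
  field_simp
  ring

lemma tsum_dougallTerm_eq (ha : 0 < a) (hb : 0 < b) (hc : 0 < c) (hd : 0 < d)
    (h : 0 < a - b - c - d) :
    ∑' n, dougallTerm a b c d n = dougallValue a b c d / dougallValue (a + 1) b c d
      * ∑' n, dougallTerm (a + 1) b c d n := by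
  have hs := (summable_dougallTerm ha hb hc hd h).hasSum
  have hs' := (summable_dougallTerm (a := a + 1) (by linarith) hb hc hd
    (by linarith)).hasSum.mul_left (dougallValue a b c d / dougallValue (a + 1) b c d)
  have hlim := (hs.sub hs').tendsto_sum_nat
  have hzero : Tendsto (fun N => ∑ n ∈ Finset.range N, (dougallTerm a b c d n
      - dougallValue a b c d / dougallValue (a + 1) b c d * dougallTerm (a + 1) b c d n))
      atTop (𝓝 0) := by
    refine (tendsto_dougallCert ha hb hc hd h).congr fun N => ?_
    simp only [← dougallCert_succ_sub ha hb hc hd h]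
    rw [Finset.sum_range_sub]
    simp [dougallCert]
  exact sub_eq_zero.1 (tendsto_nhds_unique hlim hzero)

lemma tsum_dougallTerm_div_add_nat (ha : 0 < a) (hb : 0 < b) (hc : 0 < c) (hd : 0 < d)
    (h : 0 < a - b - c - d) (N : ℕ) :
    (∑' n, dougallTerm (a + N) b c d n) / dougallValue (a + N) b c d =
      (∑' n, dougallTerm a b c d n) / dougallValue a b c d := by
  induction N with
  | zero => simp
  | succ N ih =>
    have hN : (0 : ℝ) ≤ N := by positivity
    have haN : 0 < a + N := by positivity
    have hR := dougallValue_pos haN hb hc hd (by linarith)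
    rw [← ih, tsum_dougallTerm_eq haN hb hc hd (by linarith)]
    push_cast
    rw [← add_assoc]
    field_simp

end

theorem dougall_5F4_one (a b c d : ℝ) (ha : 0 < a) (hb : 0 < b) (hc : 0 < c) (hd : 0 < d)
    (habcd : 0 < a - b - c - d) :
    ∑' n : ℕ,
        poch (a/2 + 1) n * poch a n * poch b n * poch c n * poch d n
          / (poch (a/2) n * poch (a - b + 1) n * poch (a - c + 1) n * poch (a - d + 1) n
              * (Nat.factorial n)) =
      Real.Gamma (a - b + 1) * Real.Gamma (a - c + 1) * Real.Gamma (a - d + 1)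
          * Real.Gamma (a - b - c - d + 1)
        / (Real.Gamma (a + 1) * Real.Gamma (a - b - c + 1) * Real.Gamma (a - b - d + 1)
            * Real.Gamma (a - c - d + 1)) := by
  simp only [dougallTerm_eq ha]
  have hlim := (tendsto_tsum_dougallTerm_add_nat ha hb hc hd habcd).div
    (tendsto_dougallValue_add_nat ha hb hc hd habcd) one_ne_zero
  simp only [Pi.div_def, tsum_dougallTerm_div_add_nat ha hb hc hd habcd] at hlim
  have h1 := tendsto_nhds_unique tendsto_const_nhds hlim
  rw [div_one, div_eq_one_iff_eq (dougallValue_pos ha hb hc hd habcd).ne'] at h1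
  exact h1
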